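/- Under the Setup, if P is θ-ergodic and T is uniquely ergodic, i.e. I_P(E) consists of exactly one measure, then T has the small boundary property: for every x ∈ X and every open set U containing x there is an open set V with x ∈ V ⊆ U whose topological boundary ∂V is T-small. -/

import Mathlib

open MeasureTheory Set Filter Topology
open scoped ENNReal

section Defs

variable {Ω X Y : Type*}

/-- The fiber of a set `E ⊆ Ω × X` over `ω`. -/
def fiber (E : Set (Ω × X)) (ω : Ω) : Set X := {x | (ω, x) ∈ E}

/-- The iterates `T^n_ω = T_{θ^{n-1}ω} ∘ ⋯ ∘ T_ω` of a bundle RDS. -/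
def itr (T : Ω → X → X) (θ : Ω → Ω) : ℕ → Ω → X → X
  | 0, _ => id
  | n + 1, ω => itr T θ n (θ ω) ∘ T ω

/-- Two families of sets with common index set are combinatorially equivalent if
the corresponding sub-intersections are simultaneously nonempty. -/
def CombEquiv {ι : Type*} (A B : ι → Set Y) : Prop :=
  ∀ J : Set ι, (⋂ i ∈ J, A i).Nonempty ↔ (⋂ i ∈ J, B i).Nonempty

section Top

variable [TopologicalSpace X] [TopologicalSpace Y]

/-- A family of open sets covering the whole space. -/
def IsOpenCover {ι : Type*} (U : ι → Set X) : Prop :=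
  (∀ i, IsOpen (U i)) ∧ (⋃ i, U i) = univ

/-- A family of relatively open subsets of `K` covering `K`. -/
def IsOpenCoverOn (K : Set X) {ι : Type*} (U : ι → Set X) : Prop :=
  (∀ i, ∃ V : Set X, IsOpen V ∧ U i = V ∩ K) ∧ K ⊆ ⋃ i, U i

/-- `1 + ord`: the maximal multiplicity `sup_{x ∈ K} Σ_i 1_{U i}(x)` of the family `U` on `K`. -/
noncomputable def multOn (K : Set X) {ι : Type*} [Fintype ι] (U : ι → Set X) : ℕ :=
  sSup {m | ∃ x ∈ K, m = Nat.card {i // x ∈ U i}}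

/-- `ord(U) = -1 + sup_{x ∈ K} Σ_i 1_{U i}(x)` (as a truncated natural number). -/
noncomputable def ordOn (K : Set X) {ι : Type*} [Fintype ι] (U : ι → Set X) : ℕ :=
  multOn K U - 1

/-- `V` refines `U` if every member of `V` is contained in some member of `U`. -/
def Refines {ι κ : Type*} (V : κ → Set X) (U : ι → Set X) : Prop :=
  ∀ j, ∃ i, V j ⊆ U i

/-- `D(U) = min { ord(V) : V a finite relatively open cover of K refining U }`. -/
noncomputable def DOn (K : Set X) {ι : Type*} [Fintype ι] (U : ι → Set X) : ℕ :=
  sInf {q | ∃ (m : ℕ) (V : Fin m → Set X),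
    IsOpenCoverOn K V ∧ Refines V U ∧ ordOn K V = q}

/-- `f : X → Y` is `U`-compatible if some finite open cover of `Y` pulls back to
a refinement of `U`. -/
def Compatible {ι : Type*} (U : ι → Set X) (f : X → Y) : Prop :=
  ∃ (m : ℕ) (W : Fin m → Set Y), IsOpenCover W ∧ Refines (fun j => f ⁻¹' (W j)) U

/-- The covering dimension `dim Y = sup { D(V) : V a finite open cover of Y }`. -/
noncomputable def covDim (Z : Type*) [TopologicalSpace Z] : ℕ∞ :=
  ⨆ (m : ℕ) (V : Fin m → Set Z) (_ : IsOpenCover V), (DOn (univ : Set Z) V : ℕ∞)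

/-- The dynamical cover `α_0^{n-1}(ω|E) = ⋁_{i=0}^{n-1} (T^i_ω)⁻¹ α(θ^i ω|E)` of the fiber
`E_ω`, indexed by `Fin n → ι`. -/
def dynCover (T : Ω → X → X) (θ : Ω → Ω) (E : Set (Ω × X)) {ι : Type*}
    (U : ι → Set X) (n : ℕ) (ω : Ω) : (Fin n → ι) → Set X :=
  fun j => fiber E ω ∩
    ⋂ i : Fin n, (itr T θ (i : ℕ) ω) ⁻¹' (U (j i) ∩ fiber E (θ^[(i : ℕ)] ω))

end Top

/-- `Σ_{i=0}^{n-1} 1_A (T^i_ω x)`: the number of times the orbit of `x` up to time `n`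
visits `A`. -/
noncomputable def orbCount (T : Ω → X → X) (θ : Ω → Ω) (A : Set X)
    (n : ℕ) (ω : Ω) (x : X) : ℕ :=
  Nat.card {i : Fin n // itr T θ (i : ℕ) ω x ∈ A}

/-- `b_n(ω) = sup_{x ∈ E_ω} Σ_{i=0}^{n-1} 1_A (T^i_ω x)`. -/
noncomputable def bsup (T : Ω → X → X) (θ : Ω → Ω) (E : Set (Ω × X)) (A : Set X)
    (n : ℕ) (ω : Ω) : ℕ :=
  sSup {m | ∃ x ∈ fiber E ω, m = orbCount T θ A n ω x}

/-- The `ω`-orbit capacity `ocap^ω(A) = lim_{n→∞} (1/n) b_n(ω)` (as a `limsup`). -/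
noncomputable def ocap (T : Ω → X → X) (θ : Ω → Ω) (E : Set (Ω × X)) (A : Set X)
    (ω : Ω) : ℝ :=
  Filter.atTop.limsup (fun n : ℕ => (bsup T θ E A n ω : ℝ) / n)

section Metric

variable [PseudoMetricSpace X]

/-- The Bowen-type metric `d^ω_{ε,n}(x,y) = max_{0 ≤ k < n} d(T^k_ω x, T^k_ω y)/ε`. -/
noncomputable def dBowen (T : Ω → X → X) (θ : Ω → Ω) (ε : ℝ) (n : ℕ) (ω : Ω)
    (x y : X) : ℝ :=
  ⨆ k : Fin n, dist (itr T θ (k : ℕ) ω x) (itr T θ (k : ℕ) ω y) / ε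

/-- The diameter of a set with respect to a (not necessarily standard) metric `ρ`. -/
noncomputable def diamIn (ρ : X → X → ℝ) (A : Set X) : ℝ :=
  sSup {r | ∃ x ∈ A, ∃ y ∈ A, r = ρ x y}

/-- `cov(ω,ε,n)`: the minimal cardinality of a cover of `E_ω` by sets of
`d^ω_{ε,n}`-diameter strictly less than 1. -/
noncomputable def covN (T : Ω → X → X) (θ : Ω → Ω) (E : Set (Ω × X))
    (ε : ℝ) (n : ℕ) (ω : Ω) : ℕ :=
  sInf {m | ∃ A : Fin m → Set X, fiber E ω ⊆ (⋃ j, A j) ∧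
    ∀ j, diamIn (dBowen T θ ε n ω) (A j) < 1}

/-- `sep(ω,ε,n)`: the maximal cardinality of a subset of `E_ω` whose distinct points are
at `d^ω_{ε,n}`-distance at least 1. -/
noncomputable def sepN (T : Ω → X → X) (θ : Ω → Ω) (E : Set (Ω × X))
    (ε : ℝ) (n : ℕ) (ω : Ω) : ℕ :=
  sSup {m | ∃ F : Finset X, (F : Set X) ⊆ fiber E ω ∧ F.card = m ∧
    ∀ x ∈ F, ∀ y ∈ F, x ≠ y → 1 ≤ dBowen T θ ε n ω x y}

/-- `S'(ω,ε) = limsup_{n→∞} (1/n) log sep(ω,ε,n)`. -/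
noncomputable def Ssep (T : Ω → X → X) (θ : Ω → Ω) (E : Set (Ω × X))
    (ω : Ω) (ε : ℝ) : ℝ :=
  Filter.atTop.limsup (fun n : ℕ => Real.log (sepN T θ E ε n ω) / n)

/-- `S(ω,ε) = lim_{n→∞} (1/n) log cov(ω,ε,n)` (the limit exists by subadditivity and
equals the `limsup`). -/
noncomputable def Scov (T : Ω → X → X) (θ : Ω → Ω) (E : Set (Ω × X))
    (ω : Ω) (ε : ℝ) : ℝ :=
  Filter.atTop.limsup (fun n : ℕ => Real.log (covN T θ E ε n ω) / n)

/-- The fiberwise metric mean dimension computed from separated sets: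
`liminf_{1 > ε → 0⁺} S'(ω,ε)/(-log ε)`. -/
noncomputable def mdimMfibSep (T : Ω → X → X) (θ : Ω → Ω) (E : Set (Ω × X)) (ω : Ω) : ℝ :=
  Filter.liminf (fun ε => Ssep T θ E ω ε / (-Real.log ε)) (nhdsWithin 0 (Ioo (0:ℝ) 1))

/-- The fiberwise metric mean dimension `mdim_M(T,ω) = liminf_{1 > ε → 0⁺} S(ω,ε)/(-log ε)`. -/
noncomputable def mdimMfibCov (T : Ω → X → X) (θ : Ω → Ω) (E : Set (Ω × X)) (ω : Ω) : ℝ :=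
  Filter.liminf (fun ε => Scov T θ E ω ε / (-Real.log ε)) (nhdsWithin 0 (Ioo (0:ℝ) 1))

/-- The topological entropy `h_top(T) = ∫_Ω sup_{0<ε<1} S'(ω,ε) dP(ω)`. -/
noncomputable def htop (T : Ω → X → X) (θ : Ω → Ω) (E : Set (Ω × X))
    {mΩ : MeasurableSpace Ω} (P : Measure Ω) : ℝ≥0∞ :=
  ∫⁻ ω, ⨆ ε : Ioo (0:ℝ) 1, ENNReal.ofReal (Ssep T θ E ω (ε : ℝ)) ∂P

end Metric

section Mdim

variable [TopologicalSpace X] {mΩ : MeasurableSpace Ω}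

/-- The mean topological dimension with respect to the cover `U`:
`mdim(T,α) = lim_{n→∞} (1/n) ∫_Ω D(α_0^{n-1}(ω|E)) dP(ω)` (the limit exists by
subadditivity and equals the `liminf`). -/
noncomputable def mdimCov (P : Measure Ω) (T : Ω → X → X) (θ : Ω → Ω) (E : Set (Ω × X))
    {ι : Type*} [Fintype ι] (U : ι → Set X) : ℝ≥0∞ :=
  Filter.atTop.liminf (fun n : ℕ =>
    (∫⁻ ω, (DOn (fiber E ω) (dynCover T θ E U n ω) : ℝ≥0∞) ∂P) / (n : ℝ≥0∞))

/-- The mean topological dimension `mdim(T) = sup_α mdim(T,α)` over finite open covers. -/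
noncomputable def mdim (P : Measure Ω) (T : Ω → X → X) (θ : Ω → Ω)
    (E : Set (Ω × X)) : ℝ≥0∞ :=
  ⨆ (m : ℕ) (U : Fin m → Set X) (_ : IsOpenCover U), mdimCov P T θ E U

end Mdim

end Defs

/-- Inner approximation of the image of the Baire space by images of compact sets. -/
theorem exists_compact_image_measure_le {Z : Type*} [TopologicalSpace Z] [MeasurableSpace Z]
    (m : Measure Z) [IsFiniteMeasure m] [m.OuterRegular] {f : (ℕ → ℕ) → Z}
    (hf : Continuous f) {ε : ℝ≥0∞} (hε : ε ≠ 0) :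
    ∃ K : Set (ℕ → ℕ), IsCompact K ∧ m (range f) ≤ m (f '' K) + ε := by
  obtain ⟨δ, hδ, hδs⟩ := ENNReal.exists_pos_sum_of_countable' hε ℕ
  have step : ∀ (D : Set (ℕ → ℕ)) (k : ℕ), ∃ N : ℕ,
      m (f '' D) ≤ m (f '' (D ∩ {x | x k ≤ N})) + δ k := by
    intro D k
    have hmono : Monotone fun N : ℕ => f '' (D ∩ {x | x k ≤ N}) := by
      intro a b hab
      exact image_mono (inter_subset_inter_right _ fun x hx => le_trans hx hab)
    have hU : ⋃ N : ℕ, f '' (D ∩ {x | x k ≤ N}) = f '' D := by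
      rw [← image_iUnion, ← inter_iUnion]
      congr 1
      refine inter_eq_left.2 fun x _ => mem_iUnion.2 ⟨x k, by simp⟩
    have ht := tendsto_measure_iUnion_atTop (μ := m) hmono
    rw [hU] at ht
    have ht' := ht.add_const (δ k)
    by_cases h0 : m (f '' D) = 0
    · exact ⟨0, by simp [h0]⟩
    have hlt : m (f '' D) < m (f '' D) + δ k :=
      ENNReal.lt_add_right (measure_ne_top _ _) (hδ k).ne'
    obtain ⟨N, hN⟩ := (ht'.eventually_const_lt hlt).exists
    exact ⟨N, hN.le⟩
  choose N hN using step
  let D : ℕ → Set (ℕ → ℕ) := fun k =>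
    Nat.rec univ (fun k D => D ∩ {x | x k ≤ N D k}) k
  have hDs : ∀ k, D (k + 1) = D k ∩ {x | x k ≤ N (D k) k} := fun _ => rfl
  let n : ℕ → ℕ := fun k => N (D k) k
  have hDn : ∀ k, D k = {x | ∀ i < k, x i ≤ n i} := by
    intro k
    induction k with
    | zero => ext x; simp [D]
    | succ k ih =>
      rw [hDs, ih]
      ext x
      simp only [mem_inter_iff, mem_ofPred_eq, Nat.lt_succ_iff_lt_or_eq, or_imp, forall_and,
        forall_eq]
      rw [← ih]
  have hDm : ∀ k, m (range f) ≤ m (f '' D k) + ∑ i ∈ Finset.range k, δ i := by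
    intro k
    induction k with
    | zero => simp [D]
    | succ k ih =>
      refine ih.trans ?_
      rw [Finset.sum_range_succ, add_comm _ (δ k), ← add_assoc]
      gcongr
      exact hN _ _
  have hDε : ∀ k, m (range f) ≤ m (f '' D k) + ε := fun k =>
    (hDm k).trans (by gcongr; exact (ENNReal.sum_le_tsum _).trans hδs.le)
  set K : Set (ℕ → ℕ) := Set.pi univ fun i => Set.Iic (n i) with hK
  have hKc : IsCompact K := isCompact_univ_pi fun i => (Set.finite_Iic (n i)).isCompact
  refine ⟨K, hKc, ?_⟩
  rw [(f '' K).measure_eq_iInf_isOpen m]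
  simp_rw [ENNReal.iInf_add]
  refine le_iInf fun U => le_iInf fun hKU => le_iInf fun hU => ?_
  suffices ∃ k, D k ⊆ f ⁻¹' U by
    obtain ⟨k, hk⟩ := this
    refine (hDε k).trans ?_
    gcongr
    exact image_subset_iff.2 hk
  by_contra hcon
  have hcon' : ∀ k, ∃ x ∈ D k, f x ∉ U := fun k => by
    simpa [not_subset] using fun h => hcon ⟨k, h⟩
  choose x hxD hxU using hcon'
  have hyK : ∀ k, (fun i => min (x k i) (n i)) ∈ K := fun k i _ => mem_Iic.2 (min_le_right _ _)
  obtain ⟨y, hyK', φ, hφ, hlim⟩ := hKc.tendsto_subseq hyK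
  have hxlim : Tendsto (x ∘ φ) atTop (𝓝 y) := by
    rw [tendsto_pi_nhds] at hlim ⊢
    intro i
    refine (hlim i).congr' ?_
    filter_upwards [eventually_gt_atTop i] with j hj
    have := hxD (φ j)
    rw [hDn] at this
    exact min_eq_left (this i (hj.trans_le (hφ.id_le j)))
  have hyU : f y ∈ U := hKU (mem_image_of_mem f hyK')
  obtain ⟨j, hj⟩ := (((hf.tendsto y).comp hxlim).eventually (hU.mem_nhds hyU)).exists
  exact hxU _ hj

/-- Analytic sets are universally measurable. -/
theorem MeasureTheory.AnalyticSet.nullMeasurableSet {Z : Type*} [TopologicalSpace Z] [T2Space Z]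
    [MeasurableSpace Z] [OpensMeasurableSpace Z] (m : Measure Z) [IsFiniteMeasure m]
    [m.OuterRegular] {A : Set Z} (hA : AnalyticSet A) : NullMeasurableSet A m := by
  rw [AnalyticSet] at hA
  rcases hA with rfl | ⟨f, hf, rfl⟩
  · exact nullMeasurableSet_empty
  have h : ∀ k : ℕ, ∃ K : Set (ℕ → ℕ), IsCompact K ∧
      m (range f) ≤ m (f '' K) + ((k : ℝ≥0∞) + 1)⁻¹ := fun k =>
    exists_compact_image_measure_le m hf (by simp)
  choose K hK hKm using h
  have hmeas : MeasurableSet (⋃ k, f '' K k) :=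
    .iUnion fun k => ((hK k).image hf).isClosed.measurableSet
  have hsub : (⋃ k, f '' K k) ⊆ range f := iUnion_subset fun k => image_subset_range _ _
  have hle : m (range f) ≤ m (⋃ k, f '' K k) := by
    have ht : Tendsto (fun k : ℕ => m (⋃ k, f '' K k) + ((k : ℝ≥0∞) + 1)⁻¹) atTop
        (𝓝 (m (⋃ k, f '' K k) + 0)) := by
      refine tendsto_const_nhds.add ?_
      have := (tendsto_add_atTop_iff_nat 1).2 ENNReal.tendsto_inv_nat_nhds_zero
      simpa using this
    rw [add_zero] at ht
    refine ge_of_tendsto' ht fun k => (hKm k).trans ?_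
    gcongr
    exact subset_iUnion (fun k => f '' K k) k
  exact NullMeasurableSet.congr hmeas.nullMeasurableSet
    (ae_eq_of_subset_of_measure_ge hsub hle hmeas.nullMeasurableSet (measure_ne_top _ _))

/-- A measurable set of a product depends on the first variable only through a map to the Cantor
space. -/
theorem exists_measurable_preimage_of_measurableSet_prod {Ω X : Type*} [MeasurableSpace Ω]
    [MeasurableSpace X] {S : Set (Ω × X)} (hS : MeasurableSet S) :
    ∃ φ : Ω → ℕ → Bool, Measurable φ ∧ ∃ S' : Set ((ℕ → Bool) × X), MeasurableSet S' ∧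
      S = Prod.map φ id ⁻¹' S' := by
  rw [← generateFrom_prod] at hS
  induction S, hS using MeasurableSpace.generateFrom_induction with
  | hC s hs _ =>
    classical
    obtain ⟨A, hA, B, hB, rfl⟩ := hs
    refine ⟨fun ω _ => decide (ω ∈ A), ?_, {z | z 0 = true} ×ˢ B, ?_, ?_⟩
    · exact measurable_pi_lambda _ fun _ => measurable_to_bool (by
        convert (show MeasurableSet A from hA) using 1; ext; simp)
    · exact (measurableSet_eq_fun (measurable_pi_apply 0) measurable_const).prod hB
    · ext ⟨ω, x⟩; simp
  | empty => exact ⟨fun _ _ => true, measurable_const, ∅, .empty, rfl⟩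
  | compl t _ ih =>
    obtain ⟨φ, hφ, S', hS', rfl⟩ := ih
    exact ⟨φ, hφ, S'ᶜ, hS'.compl, rfl⟩
  | iUnion s _ ih =>
    choose φ hφ S' hS' hs using ih
    refine ⟨fun ω k => φ k.unpair.1 ω k.unpair.2, ?_,
      ⋃ n, Prod.map (fun z i => z (Nat.pair n i)) id ⁻¹' S' n, ?_, ?_⟩
    · exact measurable_pi_lambda _ fun k => (measurable_pi_apply _).comp (hφ _)
    · refine .iUnion fun n => Measurable.prodMap ?_ measurable_id (hS' n)
      exact measurable_pi_lambda _ fun k => measurable_pi_apply _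
    · ext ⟨ω, x⟩
      simp only [mem_iUnion, mem_preimage, Prod.map_apply, id]
      refine exists_congr fun n => ?_
      rw [hs n]
      simp

/-- Measurable projection theorem. -/
theorem nullMeasurableSet_image_fst {Ω X : Type*} [MeasurableSpace Ω] (P : Measure Ω)
    [IsFiniteMeasure P] [TopologicalSpace X] [PolishSpace X] [MeasurableSpace X] [BorelSpace X]
    {S : Set (Ω × X)} (hS : MeasurableSet S) : NullMeasurableSet (Prod.fst '' S) P := by
  obtain ⟨φ, hφ, S', hS', rfl⟩ := exists_measurable_preimage_of_measurableSet_prod hS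
  have h1 : Prod.fst '' (Prod.map φ id ⁻¹' S') = φ ⁻¹' (Prod.fst '' S') := by
    ext ω; simp
  rw [h1]
  have h2 : AnalyticSet (Prod.fst '' S') := hS'.analyticSet_image measurable_fst
  exact (h2.nullMeasurableSet (P.map φ)).preimage
    ⟨hφ, Measure.AbsolutelyContinuous.refl _⟩

/-- Birkhoff sums of a function with negative integral are almost surely bounded above. -/
theorem Ergodic.ae_bddAbove_birkhoffSum {Ω : Type*} [MeasurableSpace Ω] {P : Measure Ω}
    [IsProbabilityMeasure P] {θ : Ω → Ω} (hθ : Ergodic θ P) {u : Ω → ℝ} (hu : Measurable u)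
    (hui : Integrable u P) (hneg : ∫ ω, u ω ∂P < 0) :
    ∀ᵐ ω ∂P, BddAbove (range fun n => birkhoffSum θ u n ω) := by
  have hθm : Measurable θ := hθ.measurable
  have hSm : ∀ n, Measurable (birkhoffSum θ u n) := fun n => by
    unfold birkhoffSum
    exact Finset.measurable_sum _ fun k _ => hu.comp (hθm.iterate k)
  set D : Set Ω := {ω | ∀ K : ℕ, ∃ n, (K : ℝ) < birkhoffSum θ u n ω} with hD
  have hDm : MeasurableSet D := by
    have : D = ⋂ K : ℕ, ⋃ n, {ω | (K : ℝ) < birkhoffSum θ u n ω} := by ext; simp [hD]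
    rw [this]
    exact .iInter fun K => .iUnion fun n => measurableSet_lt measurable_const (hSm n)
  have hD_iff : ∀ ω, ω ∈ D ↔ ¬ BddAbove (range fun n => birkhoffSum θ u n ω) := by
    intro ω
    rw [not_bddAbove_iff]
    constructor
    · intro h x
      obtain ⟨K, hK⟩ := exists_nat_gt x
      obtain ⟨n, hn⟩ := h K
      exact ⟨_, ⟨n, rfl⟩, hK.trans hn⟩
    · intro h K
      obtain ⟨_, ⟨n, rfl⟩, hn⟩ := h K
      exact ⟨n, hn⟩
  have hDinv : θ ⁻¹' D = D := by
    ext ω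
    rw [mem_preimage, hD_iff, hD_iff, not_iff_not]
    constructor
    · rintro ⟨C, hC⟩
      refine ⟨max 0 (u ω + C), ?_⟩
      rintro _ ⟨n, rfl⟩
      rcases n with _ | n
      · simp
      · have := hC ⟨n, rfl⟩
        simp only [birkhoffSum_succ'] at *
        exact le_max_of_le_right (by linarith)
    · rintro ⟨C, hC⟩
      refine ⟨C - u ω, ?_⟩
      rintro _ ⟨n, rfl⟩
      have := hC ⟨n + 1, rfl⟩
      simp only [birkhoffSum_succ'] at *
      linarith
  rcases hθ.toPreErgodic.ae_empty_or_univ hDm hDinv with h | h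
  · filter_upwards [ae_eq_empty.1 h |> measure_eq_zero_iff_ae_notMem.1] with ω hω
    rwa [hD_iff, not_not] at hω
  exfalso
  -- running maxima `max (0, S_1, …, S_n)` of the Birkhoff sums
  let M : ℕ → Ω → ℝ := fun n => Nat.rec (fun _ => 0) (fun _ m ω => max 0 (u ω + m (θ ω))) n
  have hM0 : M 0 = fun _ => 0 := rfl
  have hMs : ∀ n ω, M (n + 1) ω = max 0 (u ω + M n (θ ω)) := fun _ _ => rfl
  have hMnn : ∀ n ω, 0 ≤ M n ω := by
    rintro (_ | n) ω
    · simp [hM0]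
    · simp [hMs]
  have hMmono : ∀ n ω, M n ω ≤ M (n + 1) ω := by
    intro n
    induction n with
    | zero => intro ω; simpa [hM0] using hMnn 1 ω
    | succ n ih =>
      intro ω
      rw [hMs, hMs (n + 1)]
      have := ih (θ ω)
      gcongr
  have hMS : ∀ n ω, birkhoffSum θ u n ω ≤ M n ω := by
    intro n
    induction n with
    | zero => intro ω; simp [hM0]
    | succ n ih =>
      intro ω
      rw [hMs, birkhoffSum_succ']
      exact le_max_of_le_right (by linarith [ih (θ ω)])
  have hMint : ∀ n, Measurable (M n) ∧ Integrable (M n) P := by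
    intro n
    induction n with
    | zero => exact ⟨measurable_const, integrable_zero _ _ _⟩
    | succ n ih =>
      refine ⟨measurable_const.max (hu.add (ih.1.comp hθm)), ?_⟩
      exact (integrable_zero _ _ _).sup
        (hui.add ((hθ.toMeasurePreserving.integrable_comp ih.1.aestronglyMeasurable).2 ih.2))
  have hMθ : ∀ n, Integrable (fun ω => M n (θ ω)) P := fun n =>
    (hθ.toMeasurePreserving.integrable_comp (hMint n).1.aestronglyMeasurable).2 (hMint n).2
  have hint : ∀ n, 0 ≤ ∫ ω, (M (n + 1) ω - M n (θ ω)) ∂P := by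
    intro n
    rw [integral_sub (hMint (n + 1)).2 (hMθ n)]
    have : ∫ ω, M n (θ ω) ∂P = ∫ ω, M n ω ∂P := by
      conv_rhs => rw [← hθ.map_eq]
      rw [integral_map hθm.aemeasurable]
      exact (hMint n).1.aestronglyMeasurable
    rw [this, sub_nonneg]
    exact integral_mono (hMint n).2 (hMint (n + 1)).2 (hMmono n)
  have hlim : Tendsto (fun n => ∫ ω, (M (n + 1) ω - M n (θ ω)) ∂P) atTop (𝓝 (∫ ω, u ω ∂P)) := by
    refine tendsto_integral_of_dominated_convergence (fun ω => |u ω|)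
      (fun n => ((hMint (n + 1)).2.sub (hMθ n)).aestronglyMeasurable) hui.abs ?_ ?_
    · intro n
      filter_upwards with ω
      have := hMnn n (θ ω)
      rw [hMs, Real.norm_eq_abs, abs_le]
      have h1 := neg_abs_le (u ω)
      have h2 := le_abs_self (u ω)
      constructor <;> rcases le_total 0 (u ω + M n (θ ω)) with h | h <;> simp [h] <;> linarith
    · filter_upwards [eventuallyEq_univ.1 h] with ω hω
      rw [← hDinv] at hω
      obtain ⟨K, hK⟩ := exists_nat_gt (-u ω)
      obtain ⟨n₀, hn₀⟩ := hω K
      refine tendsto_const_nhds.congr' ?_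
      filter_upwards [eventually_ge_atTop n₀] with n hn
      have h1 : M n₀ (θ ω) ≤ M n (θ ω) :=
        monotone_nat_of_le_succ (f := fun n => M n (θ ω)) (fun n => hMmono n _) hn
      have h2 := hMS n₀ (θ ω)
      rw [hMs, max_eq_right (by linarith)]
      ring
  exact absurd (ge_of_tendsto' hlim hint) (not_le.2 hneg)

/-- Finite subadditivity of a bimeasure on rectangles. -/
theorem bimeasure_le_sum_of_prod_subset {Ω X : Type*} [MeasurableSpace Ω] [MeasurableSpace X]
    {ν : Set Ω → Measure X}
    (hadd : ∀ A A', MeasurableSet A → MeasurableSet A' → Disjoint A A' →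
      ν (A ∪ A') = ν A + ν A')
    (hempty : ν ∅ = 0) {A : ℕ → Set Ω} {B : ℕ → Set X} (hA : ∀ i, MeasurableSet (A i))
    (hB : ∀ i, MeasurableSet (B i)) (N : ℕ) {D : Set Ω} {C : Set X} (hD : MeasurableSet D)
    (hC : MeasurableSet C) (hsub : D ×ˢ C ⊆ ⋃ i ∈ Finset.range N, A i ×ˢ B i) :
    ν D C ≤ ∑ i ∈ Finset.range N, ν (A i ∩ D) (B i ∩ C) := by
  have hsplit : ∀ D D' : Set Ω, MeasurableSet D → MeasurableSet D' →
      ν D = ν (D ∩ D') + ν (D \ D') := fun D D' hD hD' => by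
    rw [← hadd _ _ (hD.inter hD') (hD.diff hD') disjoint_inf_sdiff, inter_union_sdiff]
  induction N generalizing D C with
  | zero =>
    simp only [Finset.range_zero, Finset.notMem_empty, iUnion_of_empty, iUnion_empty,
      subset_empty_iff, prod_eq_empty_iff] at hsub
    rcases hsub with rfl | rfl <;> simp [hempty]
  | succ N ih =>
    have hsub' : ∀ p ∈ D ×ˢ C, p ∉ A N ×ˢ B N → p ∈ ⋃ i ∈ Finset.range N, A i ×ˢ B i := by
      intro p hp hpN
      obtain ⟨i, hi, hpi⟩ := mem_iUnion₂.1 (hsub hp)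
      refine mem_iUnion₂.2 ⟨i, ?_, hpi⟩
      rw [Finset.mem_range_succ_iff] at hi
      rcases hi.lt_or_eq with h | rfl
      · exact Finset.mem_range.2 h
      · exact absurd hpi hpN
    have h1 := ih (hD.inter (hA N)) (hC.diff (hB N)) fun p hp => hsub' p
      ⟨hp.1.1, hp.2.1⟩ fun h => hp.2.2 h.2
    have h2 := ih (hD.diff (hA N)) hC fun p hp => hsub' p
      ⟨hp.1.1, hp.2⟩ fun h => hp.1.2 h.1
    calc ν D C = ν (D ∩ A N) (C ∩ B N) + ν (D ∩ A N) (C \ B N) + ν (D \ A N) C := by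
          rw [measure_inter_add_sdiff _ (hB N), hsplit D _ hD (hA N), Measure.add_apply]
      _ ≤ ν (D ∩ A N) (C ∩ B N)
          + ∑ i ∈ Finset.range N, ν (A i ∩ (D ∩ A N)) (B i ∩ (C \ B N))
          + ∑ i ∈ Finset.range N, ν (A i ∩ (D \ A N)) (B i ∩ C) := by gcongr
      _ ≤ ν (D ∩ A N) (C ∩ B N)
          + ∑ i ∈ Finset.range N, ν (A i ∩ (D ∩ A N)) (B i ∩ C)
          + ∑ i ∈ Finset.range N, ν (A i ∩ (D \ A N)) (B i ∩ C) := by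
          gcongr with i _
          exact sdiff_subset
      _ = ∑ i ∈ Finset.range (N + 1), ν (A i ∩ D) (B i ∩ C) := by
          rw [Finset.sum_range_succ, add_assoc, ← Finset.sum_add_distrib, add_comm,
            inter_comm D, inter_comm C]
          congr 1
          refine Finset.sum_congr rfl fun i _ => ?_
          rw [hsplit (A i ∩ D) _ ((hA i).inter hD) (hA N), Measure.add_apply, inter_assoc,
            inter_sdiff_assoc, inter_comm (A N)]

/-- A finite bimeasure whose second variable ranges over a compact space extends to a measure on
the product. -/
theorem exists_measure_prod_eq_bimeasure {Ω X : Type*} [MeasurableSpace Ω] [TopologicalSpace X]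
    [CompactSpace X] [MeasurableSpace X] [OpensMeasurableSpace X] (P : Measure Ω)
    [IsFiniteMeasure P] (ν : Set Ω → Measure X) [∀ A, (ν A).OuterRegular]
    (hadd : ∀ A A', MeasurableSet A → MeasurableSet A' → Disjoint A A' →
      ν (A ∪ A') = ν A + ν A')
    (huniv : ∀ A, MeasurableSet A → ν A univ = P A) :
    ∃ μ : Measure (Ω × X), ∀ A B, MeasurableSet A → MeasurableSet B → μ (A ×ˢ B) = ν A B := by
  have hempty : ν ∅ = 0 := by
    rw [← Measure.measure_univ_eq_zero, huniv _ .empty, measure_empty]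
  have hsplit : ∀ D D' : Set Ω, MeasurableSet D → MeasurableSet D' →
      ν D = ν (D ∩ D') + ν (D \ D') := fun D D' hD hD' => by
    rw [← hadd _ _ (hD.inter hD') (hD.diff hD') disjoint_inf_sdiff, inter_union_sdiff]
  let c : Set (Ω × X) → ℝ≥0∞ := fun S =>
    ⨅ (A : Set Ω) (B : Set X) (_ : MeasurableSet A) (_ : MeasurableSet B) (_ : S ⊆ A ×ˢ B), ν A B
  have hc_le : ∀ {S A B}, MeasurableSet A → MeasurableSet B → S ⊆ A ×ˢ B → c S ≤ ν A B :=
    fun {S A B} hA hB hS => iInf_le_of_le A <| iInf_le_of_le B <| iInf_le_of_le hA <|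
      iInf_le_of_le hB <| iInf_le_of_le hS le_rfl
  have hle_c : ∀ {S a}, (∀ A B, MeasurableSet A → MeasurableSet B → S ⊆ A ×ˢ B → a ≤ ν A B) →
      a ≤ c S :=
    fun {S a} h => le_iInf fun A => le_iInf fun B => le_iInf fun hA => le_iInf fun hB =>
      le_iInf fun hS => h A B hA hB hS
  have hc0 : c ∅ = 0 := by
    refine le_antisymm ((hc_le .empty .empty (empty_subset _)).trans ?_) bot_le
    simp
  let O := OuterMeasure.ofFunction c hc0
  have hcar : (Prod.instMeasurableSpace : MeasurableSpace (Ω × X)) ≤ O.caratheodory := by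
    refine sup_le ?_ ?_
    · rintro _ ⟨A₀, hA₀, rfl⟩
      refine OuterMeasure.ofFunction_caratheodory fun t => hle_c fun A B hA hB ht => ?_
      rw [hsplit A A₀ hA hA₀, Measure.add_apply]
      refine add_le_add (hc_le (hA.inter hA₀) hB fun p hp => ?_)
        (hc_le (hA.diff hA₀) hB fun p hp => ?_)
      · exact ⟨⟨(ht hp.1).1, hp.2⟩, (ht hp.1).2⟩
      · exact ⟨⟨(ht hp.1).1, hp.2⟩, (ht hp.1).2⟩
    · rintro _ ⟨B₀, hB₀, rfl⟩
      refine OuterMeasure.ofFunction_caratheodory fun t => hle_c fun A B hA hB ht => ?_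
      rw [← measure_inter_add_sdiff B hB₀]
      refine add_le_add (hc_le hA (hB.inter hB₀) fun p hp => ?_)
        (hc_le hA (hB.diff hB₀) fun p hp => ?_)
      · exact ⟨(ht hp.1).1, (ht hp.1).2, hp.2⟩
      · exact ⟨(ht hp.1).1, (ht hp.1).2, hp.2⟩
  let μ := O.toMeasure hcar
  have hμle : ∀ A B, MeasurableSet A → MeasurableSet B → μ (A ×ˢ B) ≤ ν A B := by
    intro A B hA hB
    rw [toMeasure_apply _ _ (hA.prod hB)]
    exact (OuterMeasure.ofFunction_le _).trans (hc_le hA hB subset_rfl)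
  have hμuniv : P univ ≤ μ univ := by
    rw [toMeasure_apply _ _ .univ]
    refine le_iInf fun f => le_iInf fun hf => ?_
    refine ENNReal.le_of_forall_pos_le_add fun ε hε _ => ?_
    obtain ⟨δ, hδ, hδs⟩ := ENNReal.exists_pos_sum_of_countable'
      (ENNReal.coe_pos.2 hε).ne' ℕ
    have hex : ∀ i, ∃ A G, MeasurableSet A ∧ IsOpen G ∧ f i ⊆ A ×ˢ G ∧
        ν A G ≤ c (f i) + δ i := by
      intro i
      have hδ2 : δ i / 2 ≠ 0 := (ENNReal.half_pos (hδ i).ne').ne'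
      have hfin : c (f i) ≠ ⊤ :=
        ((hc_le .univ .univ (by simp)).trans_lt
          ((huniv univ .univ).trans_lt (measure_lt_top _ _))).ne
      have hlt : c (f i) < c (f i) + δ i / 2 := ENNReal.lt_add_right hfin hδ2
      obtain ⟨A, hlt⟩ := iInf_lt_iff.1 hlt
      obtain ⟨B, hlt⟩ := iInf_lt_iff.1 hlt
      obtain ⟨hA, hlt⟩ := iInf_lt_iff.1 hlt
      obtain ⟨hB, hlt⟩ := iInf_lt_iff.1 hlt
      obtain ⟨hS, hlt⟩ := iInf_lt_iff.1 hlt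
      obtain ⟨G, hBG, hG, hle⟩ := B.exists_isOpen_le_add (ν A) hδ2
      refine ⟨A, G, hA, hG, hS.trans (prod_mono subset_rfl hBG), hle.trans ?_⟩
      calc ν A B + δ i / 2 ≤ c (f i) + δ i / 2 + δ i / 2 := by gcongr
        _ = c (f i) + δ i := by rw [add_assoc, ENNReal.add_halves]
    choose A G hA hG hfAG hνle using hex
    let W : ℕ → Set Ω := fun N => ⋃ (J ∈ (Finset.range N).powerset)
      (_ : univ ⊆ ⋃ i ∈ J, G i), ⋂ i ∈ J, A i
    have hWm : ∀ N, MeasurableSet (W N) := fun N =>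
      Finset.measurableSet_biUnion _ fun J _ => .iUnion fun _ =>
        Finset.measurableSet_biInter _ fun i _ => hA i
    have hWmono : Monotone W := by
      intro N M hNM
      refine iUnion₂_subset fun J hJ => iUnion_subset fun hJG => ?_
      refine subset_iUnion₂_of_subset J ?_ (subset_iUnion_of_subset hJG subset_rfl)
      rw [Finset.mem_powerset] at hJ ⊢
      exact hJ.trans (Finset.range_mono hNM)
    have hWU : ⋃ N, W N = univ := by
      refine eq_univ_of_forall fun ω => ?_
      obtain ⟨b, hb, hbf, hbc⟩ := (isCompact_univ (X := X)).elim_finite_subcover_image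
        (b := {i | ω ∈ A i}) (c := G) (fun i _ => hG i) (by
          intro x _
          obtain ⟨i, hi⟩ := mem_iUnion.1 (hf (mem_univ (ω, x)))
          have := hfAG i hi
          exact mem_iUnion₂.2 ⟨i, this.1, this.2⟩)
      obtain ⟨J, rfl⟩ := hbf.exists_finset_coe
      refine mem_iUnion.2 ⟨J.sup id + 1, mem_iUnion₂.2 ⟨J, ?_, mem_iUnion.2 ⟨?_, ?_⟩⟩⟩
      · rw [Finset.mem_powerset]
        intro i hi
        rw [Finset.mem_range_succ_iff]
        exact Finset.le_sup (f := id) hi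
      · simpa using hbc
      · exact mem_iInter₂.2 fun i hi => hb hi
    have hW : ∀ N, P (W N) ≤ ∑' i, c (f i) + ε := by
      intro N
      have hsub : W N ×ˢ univ ⊆ ⋃ i ∈ Finset.range N, A i ×ˢ G i := by
        rintro ⟨ω, x⟩ ⟨hω, -⟩
        obtain ⟨J, hJ, hω⟩ := mem_iUnion₂.1 hω
        obtain ⟨hJG, hω⟩ := mem_iUnion.1 hω
        obtain ⟨i, hi, hx⟩ := mem_iUnion₂.1 (hJG (mem_univ x))
        exact mem_iUnion₂.2 ⟨i, Finset.mem_powerset.1 hJ hi, mem_iInter₂.1 hω i hi, hx⟩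
      have hmono : ∀ i, ν (A i ∩ W N) ≤ ν (A i) := fun i => by
        rw [hsplit (A i) _ (hA i) (hWm N)]
        exact Measure.le_add_right le_rfl
      calc P (W N) = ν (W N) univ := (huniv _ (hWm N)).symm
        _ ≤ ∑ i ∈ Finset.range N, ν (A i ∩ W N) (G i ∩ univ) :=
          bimeasure_le_sum_of_prod_subset hadd hempty hA (fun i => (hG i).measurableSet) N
            (hWm N) .univ hsub
        _ ≤ ∑ i ∈ Finset.range N, (c (f i) + δ i) := by
          refine Finset.sum_le_sum fun i _ => ?_
          rw [inter_univ]
          exact (hmono i _).trans (hνle i)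
        _ ≤ ∑' i, (c (f i) + δ i) := ENNReal.sum_le_tsum _
        _ ≤ ∑' i, c (f i) + ε := by rw [ENNReal.tsum_add]; gcongr
    have ht := tendsto_measure_iUnion_atTop (μ := P) hWmono
    rw [hWU] at ht
    exact le_of_tendsto' ht hW
  refine ⟨μ, fun A B hA hB => le_antisymm (hμle A B hA hB) ?_⟩
  have hfinA : ν A Bᶜ ≠ ⊤ := ((measure_mono (subset_univ _)).trans_lt
    ((huniv A hA).trans_lt (measure_lt_top _ _))).ne
  have hfinAc : ν Aᶜ univ ≠ ⊤ := ((huniv _ hA.compl).trans_lt (measure_lt_top _ _)).ne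
  have h1 : μ univ ≤ μ (A ×ˢ B) + (ν A Bᶜ + ν Aᶜ univ) := by
    have : (univ : Set (Ω × X)) = A ×ˢ B ∪ (A ×ˢ Bᶜ ∪ Aᶜ ×ˢ univ) := by
      ext ⟨ω, x⟩; simp; tauto
    rw [this]
    refine (measure_union_le _ _).trans (add_le_add le_rfl ((measure_union_le _ _).trans ?_))
    exact add_le_add (hμle _ _ hA hB.compl) (hμle _ _ hA.compl .univ)
  have h2 : ν A B + (ν A Bᶜ + ν Aᶜ univ) = P univ := by
    rw [← add_assoc, measure_add_measure_compl hB, huniv A hA, huniv _ hA.compl,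
      measure_add_measure_compl hA]
  rw [← ENNReal.add_le_add_iff_right (ENNReal.add_ne_top.2 ⟨hfinA, hfinAc⟩), h2]
  exact hμuniv.trans h1

/-- The submodule of bounded real functions on a type. -/
def boundedFun (α : Type*) : Submodule ℝ (α → ℝ) where
  carrier := {f | ∃ M, ∀ z, |f z| ≤ M}
  add_mem' := by
    rintro f g ⟨M, hM⟩ ⟨N, hN⟩
    exact ⟨M + N, fun z => (abs_add_le _ _).trans (add_le_add (hM z) (hN z))⟩
  zero_mem' := ⟨0, fun z => by simp⟩
  smul_mem' := by
    rintro c f ⟨M, hM⟩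
    refine ⟨|c| * M, fun z => ?_⟩
    rw [Pi.smul_apply, smul_eq_mul, abs_mul]
    gcongr
    exact hM z

theorem indicator_mem_boundedFun {α : Type*} (S : Set α) {f : α → ℝ} (hf : f ∈ boundedFun α) :
    S.indicator f ∈ boundedFun α := by
  obtain ⟨M, hM⟩ := hf
  refine ⟨M, fun z => ?_⟩
  by_cases hz : z ∈ S
  · simpa [hz] using hM z
  · simpa [hz] using (abs_nonneg _).trans (hM z)

theorem comp_mem_boundedFun {α β : Type*} {f : β → ℝ} (hf : f ∈ boundedFun β) (φ : α → β) :
    f ∘ φ ∈ boundedFun α :=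
  hf.imp fun _ hM z => hM (φ z)

theorem one_mem_boundedFun (α : Type*) : (1 : α → ℝ) ∈ boundedFun α := ⟨1, fun z => by simp⟩

theorem indicator_one_mem_boundedFun {α : Type*} (S : Set α) :
    S.indicator (1 : α → ℝ) ∈ boundedFun α :=
  indicator_mem_boundedFun S (one_mem_boundedFun α)

theorem ContinuousMap.mem_boundedFun {X : Type*} [TopologicalSpace X] [CompactSpace X]
    (g : C(X, ℝ)) : ⇑g ∈ boundedFun X := by
  exact ⟨‖g‖, fun x => g.norm_coe_le_norm x⟩

open scoped CompactlySupported in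
/-- A positive functional on the bounded functions of `Ω × X`, `X` compact, whose marginal on `Ω`
is a measure `P`, is dominated on rectangles with open second side from below by a measure. -/
theorem exists_measure_prod_le_of_positive_functional {Ω X : Type*} [MeasurableSpace Ω]
    [MetricSpace X] [CompactSpace X] [MeasurableSpace X] [BorelSpace X] (P : Measure Ω)
    [IsFiniteMeasure P] (L : (Ω × X → ℝ) →ₗ[ℝ] ℝ)
    (hpos : ∀ f ∈ boundedFun (Ω × X), 0 ≤ f → 0 ≤ L f)
    (hmarg : ∀ A : Set Ω, MeasurableSet A → L ((A ×ˢ univ).indicator 1) = P.real A) :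
    ∃ μ : Measure (Ω × X), μ.map Prod.fst = P ∧ ∀ (A : Set Ω) (G : Set X), MeasurableSet A →
      IsOpen G → μ (A ×ˢ G) ≤ ENNReal.ofReal (L ((A ×ˢ G).indicator 1)) := by
  have hmono : ∀ f ∈ boundedFun (Ω × X), ∀ g ∈ boundedFun (Ω × X), f ≤ g → L f ≤ L g := by
    intro f hf g hg hfg
    have := hpos (g - f) (sub_mem hg hf) (sub_nonneg.2 hfg)
    rwa [map_sub, sub_nonneg] at this
  let F : Set Ω → (X → ℝ) → Ω × X → ℝ := fun A g => (A ×ˢ univ).indicator fun p => g p.2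
  have hF : ∀ A (g : C_c(X, ℝ)), F A g ∈ boundedFun (Ω × X) := fun A g =>
    indicator_mem_boundedFun _ (comp_mem_boundedFun g.toContinuousMap.mem_boundedFun Prod.snd)
  let Λ : Set Ω → C_c(X, ℝ) →ₚ[ℝ] ℝ := fun A => PositiveLinearMap.mk₀
    { toFun := fun g => L (F A g)
      map_add' := fun g h => by
        rw [← map_add]; congr 1; ext p; by_cases hp : p.1 ∈ A <;> simp [F, indicator, hp]
      map_smul' := fun c g => by
        rw [RingHom.id_apply, ← map_smul]; congr 1; ext p
        by_cases hp : p.1 ∈ A <;> simp [F, indicator, hp] }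
    (fun g hg => hpos _ (hF A g) (indicator_nonneg fun p _ => hg p.2))
  have hΛ : ∀ A g, Λ A g = L (F A g) := fun _ _ => rfl
  let ν : Set Ω → Measure X := fun A => RealRMK.rieszMeasure (Λ A)
  have hνfin : ∀ A, IsFiniteMeasure (ν A) := fun A => inferInstanceAs
    (IsFiniteMeasure (RealRMK.rieszMeasure (Λ A)))
  have hνreg : ∀ A, (ν A).Regular := fun A => inferInstanceAs
    ((RealRMK.rieszMeasure (Λ A)).Regular)
  have hadd : ∀ A A', MeasurableSet A → MeasurableSet A' → Disjoint A A' →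
      ν (A ∪ A') = ν A + ν A' := by
    intro A A' _ _ hAA'
    refine Measure.ext_of_integral_eq_on_compactlySupported fun g => ?_
    rw [integral_add_measure g.integrable g.integrable]
    simp only [ν, RealRMK.integral_rieszMeasure, hΛ]
    rw [← map_add]
    congr 1
    ext p
    have : p.1 ∈ A → p.1 ∉ A' := fun h h' => disjoint_left.1 hAA' h h'
    by_cases hp : p.1 ∈ A <;> by_cases hp' : p.1 ∈ A' <;>
      simp_all [F, indicator]
  let one : C_c(X, ℝ) := ⟨1, HasCompactSupport.of_compactSpace _⟩
  have hone : ∀ A, MeasurableSet A → Λ A one = P.real A := fun A hA => by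
    rw [hΛ, ← hmarg A hA]; rfl
  have huniv : ∀ A, MeasurableSet A → ν A univ = P A := by
    intro A hA
    rw [← ofReal_measureReal (measure_ne_top P A), ← hone A hA]
    refine le_antisymm ?_ ?_
    · exact RealRMK.rieszMeasure_le_of_eq_one _ (fun _ => zero_le_one) isCompact_univ
        fun _ _ => rfl
    · exact RealRMK.le_rieszMeasure_tsupport_subset _ (fun _ => ⟨zero_le_one, le_rfl⟩)
        (subset_univ _)
  obtain ⟨μ, hμ⟩ := exists_measure_prod_eq_bimeasure P ν hadd huniv
  refine ⟨μ, ?_, fun A G hA hG => ?_⟩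
  · ext A hA
    rw [Measure.map_apply measurable_fst hA, ← huniv A hA, ← hμ A univ hA .univ, prod_univ]
  rw [hμ A G hA hG.measurableSet, hG.measure_eq_iSup_isCompact]
  refine iSup_le fun K => iSup_le fun hKG => iSup_le fun hK => ?_
  obtain ⟨f, hf1, hf0, hfc, hf01⟩ := exists_continuous_one_zero_of_isCompact hK
    hG.isClosed_compl (disjoint_compl_right_iff_subset.2 hKG)
  let g : C_c(X, ℝ) := ⟨f, hfc⟩
  refine (RealRMK.rieszMeasure_le_of_eq_one (Λ A) (f := g) (fun x => (hf01 x).1) hK hf1).trans ?_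
  refine ENNReal.ofReal_le_ofReal ?_
  rw [hΛ]
  refine hmono _ (hF A g) _ (indicator_one_mem_boundedFun _) fun p => ?_
  have hFp : F A g p = (A ×ˢ univ).indicator (fun p : Ω × X => f p.2) p := rfl
  rw [hFp]
  by_cases hp : p.1 ∈ A
  · by_cases hpG : p.2 ∈ G
    · simpa [indicator, hp, hpG] using (hf01 p.2).2
    · simpa [indicator, hp, hpG] using (hf0 hpG).le
  · simp [indicator, hp]

/-- The domination `μ ≤ L` on rectangles with open second side passes to finite unions. -/
theorem measure_le_of_finite_union_prod {Ω X : Type*} [MeasurableSpace Ω] [TopologicalSpace X]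
    [MeasurableSpace X] [OpensMeasurableSpace X]
    {L : (Ω × X → ℝ) →ₗ[ℝ] ℝ} (hpos : ∀ f ∈ boundedFun (Ω × X), 0 ≤ f → 0 ≤ L f)
    {μ : Measure (Ω × X)} (hμ : ∀ (A : Set Ω) (G : Set X), MeasurableSet A →
      IsOpen G → μ (A ×ˢ G) ≤ ENNReal.ofReal (L ((A ×ˢ G).indicator 1)))
    {A : ℕ → Set Ω} {G : ℕ → Set X} (hA : ∀ i, MeasurableSet (A i)) (hG : ∀ i, IsOpen (G i))
    (N : ℕ) : ∀ {D : Set Ω} {V : Set X}, MeasurableSet D → IsOpen V →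
      μ {p | p.1 ∈ D ∧ (p.2 ∈ V ∨ ∃ i < N, p.1 ∈ A i ∧ p.2 ∈ G i)} ≤ ENNReal.ofReal
        (L ({p | p.1 ∈ D ∧ (p.2 ∈ V ∨ ∃ i < N, p.1 ∈ A i ∧ p.2 ∈ G i)}.indicator 1)) := by
  induction N with
  | zero =>
    intro D V hD hV
    have : {p : Ω × X | p.1 ∈ D ∧ (p.2 ∈ V ∨ ∃ i < 0, p.1 ∈ A i ∧ p.2 ∈ G i)} = D ×ˢ V := by
      ext p; simp
    rw [this]
    exact hμ D V hD hV
  | succ N ih =>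
    intro D V hD hV
    set S := {p : Ω × X | p.1 ∈ D ∩ A N ∧ (p.2 ∈ V ∪ G N ∨ ∃ i < N, p.1 ∈ A i ∧ p.2 ∈ G i)} with hS
    set S' := {p : Ω × X | p.1 ∈ D \ A N ∧ (p.2 ∈ V ∨ ∃ i < N, p.1 ∈ A i ∧ p.2 ∈ G i)} with hS'
    have hunion : {p : Ω × X | p.1 ∈ D ∧ (p.2 ∈ V ∨ ∃ i < N + 1, p.1 ∈ A i ∧ p.2 ∈ G i)}
        = S ∪ S' := by
      ext p
      simp only [hS, hS', Nat.lt_succ_iff_lt_or_eq, or_and_right, exists_or, mem_union,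
        mem_ofPred_eq, mem_inter_iff, Set.mem_sdiff, exists_eq_left]
      grind
    have hdisj : Disjoint S S' := disjoint_left.2 fun p hp hp' => hp'.1.2 hp.1.2
    have hind : ∀ W : Set (Ω × X), 0 ≤ L (W.indicator 1) := fun W =>
      hpos _ (indicator_one_mem_boundedFun W) (indicator_nonneg fun _ _ => zero_le_one)
    rw [hunion, indicator_union_of_disjoint hdisj]
    change _ ≤ ENNReal.ofReal (L (S.indicator 1 + S'.indicator 1))
    rw [map_add, ENNReal.ofReal_add (hind S) (hind S')]
    exact (measure_union_le _ _).trans (add_le_add (ih (hD.inter (hA N)) (hV.union (hG N)))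
      (ih (hD.diff (hA N)) hV))

/-- The domination `μ ≤ L` on rectangles with open second side passes to all measurable sets with
open fibers. -/
theorem measure_le_of_ae_isOpen_fiber {Ω X : Type*} [MeasurableSpace Ω] {P : Measure Ω}
    [IsFiniteMeasure P] [P.IsComplete] [TopologicalSpace X] [PolishSpace X] [MeasurableSpace X]
    [BorelSpace X]
    {L : (Ω × X → ℝ) →ₗ[ℝ] ℝ} (hpos : ∀ f ∈ boundedFun (Ω × X), 0 ≤ f → 0 ≤ L f)
    {μ : Measure (Ω × X)} (hfst : μ.map Prod.fst = P)
    (hμ : ∀ (A : Set Ω) (G : Set X), MeasurableSet A →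
      IsOpen G → μ (A ×ˢ G) ≤ ENNReal.ofReal (L ((A ×ˢ G).indicator 1)))
    {U : Set (Ω × X)} (hU : MeasurableSet U) (hopen : ∀ᵐ ω ∂P, IsOpen (fiber U ω)) :
    μ U ≤ ENNReal.ofReal (L (U.indicator 1)) := by
  obtain ⟨G, hG⟩ := ((TopologicalSpace.countable_countableBasis X).insert ∅).exists_eq_range
    (insert_nonempty _ _)
  have hGo : ∀ i, IsOpen (G i) := fun i => by
    rcases hG.symm ▸ mem_range_self (f := G) i with h | h
    · exact h ▸ isOpen_empty
    · exact TopologicalSpace.isOpen_of_mem_countableBasis h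
  let A : ℕ → Set Ω := fun i => {ω | G i ⊆ fiber U ω}
  have hA : ∀ i, MeasurableSet (A i) := fun i => by
    have himg : A i = (Prod.fst '' (Uᶜ ∩ univ ×ˢ G i))ᶜ := by
      ext ω
      simp [A, fiber, subset_def, not_imp_not]
    rw [himg]
    exact (nullMeasurableSet_image_fst P (hU.compl.inter
      (MeasurableSet.univ.prod (hGo i).measurableSet))).measurable_of_complete.compl
  let W : ℕ → Set (Ω × X) := fun n =>
    {p | p.1 ∈ univ ∧ (p.2 ∈ (∅ : Set X) ∨ ∃ i < n, p.1 ∈ A i ∧ p.2 ∈ G i)}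
  have hWU : ∀ n, W n ⊆ U := by
    rintro n p ⟨-, h | ⟨i, -, hi, hpi⟩⟩
    · exact absurd h (notMem_empty _)
    · exact hi hpi
  have hWmono : Monotone W := by
    rintro m n hmn p ⟨h1, h | ⟨i, hi, hp⟩⟩
    · exact absurd h (notMem_empty _)
    · exact ⟨h1, Or.inr ⟨i, hi.trans_le hmn, hp⟩⟩
  have hae : ∀ᵐ p ∂μ, IsOpen (fiber U p.1) :=
    ae_of_ae_map measurable_fst.aemeasurable (hfst.symm ▸ hopen)
  have hle : μ U ≤ μ (⋃ n, W n) := by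
    refine measure_mono_ae ?_
    filter_upwards [hae] with p hp hpU
    obtain ⟨V, hV, hpV, hVU⟩ :=
      (TopologicalSpace.isBasis_countableBasis X).exists_subset_of_mem_open
        (show p.2 ∈ fiber U p.1 from hpU) hp
    obtain ⟨i, rfl⟩ : V ∈ range G := hG ▸ mem_insert_of_mem _ hV
    exact mem_iUnion.2 ⟨i + 1, mem_univ _, Or.inr ⟨i, i.lt_succ_self, hVU, hpV⟩⟩
  rw [hWmono.measure_iUnion] at hle
  refine hle.trans (iSup_le fun n => ?_)
  refine (measure_le_of_finite_union_prod hpos hμ hA hGo n .univ isOpen_empty).trans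
    (ENNReal.ofReal_le_ofReal ?_)
  rw [← sub_nonneg, ← map_sub]
  exact hpos _ (sub_mem (indicator_one_mem_boundedFun _) (indicator_one_mem_boundedFun _))
    (sub_nonneg.2 (indicator_le_indicator_of_subset (hWU n) fun _ => zero_le_one))

/-- Birkhoff sums along a skew product of a function that is dominated, on an invariant set `E`, by
a function of the base plus a coboundary. -/
theorem birkhoffSum_le_birkhoffSum_add_sub {Ω X : Type*} {θ : Ω → Ω} {Φ : Ω × X → Ω × X}
    (hΦ : ∀ p, (Φ p).1 = θ p.1) {E : Set (Ω × X)} {f h : Ω × X → ℝ} {u : Ω → ℝ} {ω : Ω}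
    (hinv : ∀ i, ∀ x ∈ fiber E (θ^[i] ω), Φ (θ^[i] ω, x) ∈ E)
    (hf : ∀ i, ∀ x ∈ fiber E (θ^[i] ω),
      f (θ^[i] ω, x) ≤ u (θ^[i] ω) + h (θ^[i] ω, x) - h (Φ (θ^[i] ω, x)))
    {x : X} (hx : x ∈ fiber E ω) (n : ℕ) :
    birkhoffSum Φ f n (ω, x) ≤ birkhoffSum θ u n ω + h (ω, x) - h (Φ^[n] (ω, x)) := by
  have hfst : ∀ n, (Φ^[n] (ω, x)).1 = θ^[n] ω := by
    intro n
    induction n with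
    | zero => rfl
    | succ n ih => rw [Function.iterate_succ_apply', Function.iterate_succ_apply', hΦ, ih]
  have hpt : ∀ n, Φ^[n] (ω, x) = (θ^[n] ω, (Φ^[n] (ω, x)).2) := fun n => Prod.ext (hfst n) rfl
  have hmem : ∀ n, Φ^[n] (ω, x) ∈ E := by
    intro n
    induction n with
    | zero => exact hx
    | succ n ih =>
      rw [Function.iterate_succ_apply', hpt n]
      rw [hpt n] at ih
      exact hinv n _ ih
  induction n with
  | zero => simp
  | succ n ih =>
    have hn := hmem n
    rw [hpt n] at hn
    have := hf n _ hn
    rw [← hpt n] at this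
    rw [birkhoffSum_succ, birkhoffSum_succ, Function.iterate_succ_apply']
    linarith

/-- The integrals of the functions on the base that, up to the coboundary of a bounded function,
dominate `f` on the fibers of `E` over almost every point. -/
def coboundaryBounds {Ω X : Type*} [MeasurableSpace Ω] (P : Measure Ω) (E : Set (Ω × X))
    (Φ : Ω × X → Ω × X) (f : Ω × X → ℝ) : Set ℝ :=
  {r | ∃ (u : Ω → ℝ) (h : Ω × X → ℝ), Measurable u ∧ Integrable u P ∧ h ∈ boundedFun (Ω × X) ∧
    (∀ᵐ ω ∂P, ∀ x ∈ fiber E ω, f (ω, x) ≤ u ω + h (ω, x) - h (Φ (ω, x))) ∧ ∫ ω, u ω ∂P = r}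

theorem MeasureTheory.MeasurePreserving.integral_birkhoffSum {Ω : Type*} [MeasurableSpace Ω]
    {P : Measure Ω} {θ : Ω → Ω} (hθ : MeasurePreserving θ P P) {u : Ω → ℝ}
    (hu : Integrable u P) (n : ℕ) :
    Integrable (birkhoffSum θ u n) P ∧ ∫ ω, birkhoffSum θ u n ω ∂P = n * ∫ ω, u ω ∂P := by
  have hi : ∀ i, Integrable (fun ω => u (θ^[i] ω)) P := fun i =>
    (hθ.iterate i).integrable_comp_of_integrable hu
  have heq : ∀ i, ∫ ω, u (θ^[i] ω) ∂P = ∫ ω, u ω ∂P := fun i => by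
    have h := (hθ.iterate i).map_eq
    conv_rhs => rw [← h]
    rw [integral_map (hθ.iterate i).measurable.aemeasurable]
    rw [h]; exact hu.aestronglyMeasurable
  unfold birkhoffSum
  refine ⟨integrable_finsetSum _ fun i _ => hi i, ?_⟩
  rw [integral_finsetSum _ fun i _ => hi i]
  simp [heq]

theorem le_of_mem_coboundaryBounds {Ω X : Type*} [MeasurableSpace Ω] {P : Measure Ω}
    [IsProbabilityMeasure P] {θ : Ω → Ω} (hθ : MeasurePreserving θ P P) {Φ : Ω × X → Ω × X}
    (hΦ : ∀ p, (Φ p).1 = θ p.1) {E : Set (Ω × X)} (hne : ∀ ω, (fiber E ω).Nonempty)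
    (hinv : ∀ᵐ ω ∂P, ∀ x ∈ fiber E ω, Φ (ω, x) ∈ E) {f : Ω × X → ℝ} {c r : ℝ}
    (hc : ∀ p, c ≤ f p) (hr : r ∈ coboundaryBounds P E Φ f) : c ≤ r := by
  obtain ⟨u, h, -, hui, ⟨K, hK⟩, hfu, rfl⟩ := hr
  have hn : ∀ n : ℕ, n * c ≤ n * ∫ ω, u ω ∂P + 2 * K := by
    intro n
    obtain ⟨hi, heq⟩ := hθ.integral_birkhoffSum hui n
    have : ∫ ω, (n * c : ℝ) ∂P ≤ ∫ ω, (birkhoffSum θ u n ω + 2 * K) ∂P := by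
      refine integral_mono_ae (integrable_const _) (hi.add (integrable_const _)) ?_
      have h1 := ae_all_iff.2 fun i => (hθ.iterate i).quasiMeasurePreserving.ae hinv
      have h2 := ae_all_iff.2 fun i => (hθ.iterate i).quasiMeasurePreserving.ae hfu
      filter_upwards [h1, h2] with ω h1 h2
      obtain ⟨x, hx⟩ := hne ω
      have h3 := birkhoffSum_le_birkhoffSum_add_sub hΦ h1 h2 hx n
      have h4 : (n : ℝ) * c ≤ birkhoffSum Φ f n (ω, x) := by
        have := Finset.card_nsmul_le_sum (Finset.range n) (fun k => f (Φ^[k] (ω, x))) c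
          fun k _ => hc _
        simpa [birkhoffSum] using this
      have := abs_le.1 (hK (ω, x))
      have := abs_le.1 (hK (Φ^[n] (ω, x)))
      linarith
    rw [integral_add hi (integrable_const _), heq] at this
    simpa using this
  by_contra! hlt
  obtain ⟨n, hn'⟩ := exists_nat_gt (2 * K / (c - ∫ ω, u ω ∂P))
  rw [div_lt_iff₀ (sub_pos.2 hlt)] at hn'
  linarith [hn n]

/-- A positive functional, invariant under a skew product and with given marginal, whose value at
the indicator of `S` is maximal. -/
theorem exists_invariant_functional {Ω X : Type*} [MeasurableSpace Ω] {P : Measure Ω}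
    [IsProbabilityMeasure P] {θ : Ω → Ω} (hθ : MeasurePreserving θ P P) {Φ : Ω × X → Ω × X}
    (hΦ : ∀ p, (Φ p).1 = θ p.1) {E : Set (Ω × X)} (hne : ∀ ω, (fiber E ω).Nonempty)
    (hinv : ∀ᵐ ω ∂P, ∀ x ∈ fiber E ω, Φ (ω, x) ∈ E) (S : Set (Ω × X)) :
    ∃ L : (Ω × X → ℝ) →ₗ[ℝ] ℝ,
      (∀ f ∈ boundedFun (Ω × X), (∀ᵐ ω ∂P, ∀ x ∈ fiber E ω, 0 ≤ f (ω, x)) → 0 ≤ L f) ∧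
      (∀ A : Set Ω, MeasurableSet A → L ((A ×ˢ univ).indicator 1) = P.real A) ∧
      (∀ f ∈ boundedFun (Ω × X), L (f ∘ Φ) = L f) ∧
      ∀ ε, L (S.indicator 1) < ε → ∃ r ∈ coboundaryBounds P E Φ (S.indicator 1), r < ε := by
  let p : (Ω × X → ℝ) → ℝ := fun f => sInf (coboundaryBounds P E Φ f)
  have hbdd : ∀ f ∈ boundedFun (Ω × X), BddBelow (coboundaryBounds P E Φ f) := by
    rintro f ⟨M, hM⟩
    exact ⟨-M, fun r hr =>
      le_of_mem_coboundaryBounds hθ hΦ hne hinv (fun q => (abs_le.1 (hM q)).1) hr⟩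
  have hnon : ∀ f ∈ boundedFun (Ω × X), (coboundaryBounds P E Φ f).Nonempty := by
    rintro f ⟨M, hM⟩
    exact ⟨_, fun _ => M, 0, measurable_const, integrable_const _, zero_mem _,
      .of_forall fun ω x _ => by simpa using (abs_le.1 (hM (ω, x))).2, rfl⟩
  have hsmul : ∀ c : ℝ, 0 < c → ∀ f ∈ boundedFun (Ω × X), p (c • f) ≤ c * p f := by
    intro c hc f hf
    rw [← div_le_iff₀' hc]
    refine le_csInf (hnon f hf) ?_
    rintro _ ⟨u, h, hu, hui, hh, hfu, rfl⟩
    rw [div_le_iff₀' hc]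
    refine csInf_le (hbdd _ (Submodule.smul_mem _ c hf)) ⟨fun ω => c * u ω, c • h,
      hu.const_mul c, hui.const_mul c, Submodule.smul_mem _ c hh, ?_, integral_const_mul _ _⟩
    filter_upwards [hfu] with ω hω x hx
    simp only [Pi.smul_apply, smul_eq_mul]
    nlinarith [hω x hx]
  have hadd : ∀ f ∈ boundedFun (Ω × X), ∀ g ∈ boundedFun (Ω × X), p (f + g) ≤ p f + p g := by
    intro f hf g hg
    rw [← sub_le_iff_le_add]
    refine le_csInf (hnon f hf) ?_
    rintro _ ⟨u, h, hu, hui, hh, hfu, rfl⟩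
    rw [sub_le_comm]
    refine le_csInf (hnon g hg) ?_
    rintro _ ⟨v, k, hv, hvi, hk, hgv, rfl⟩
    rw [sub_le_iff_le_add']
    refine csInf_le (hbdd _ (add_mem hf hg)) ⟨fun ω => u ω + v ω, h + k,
      hu.add hv, hui.add hvi, add_mem hh hk, ?_, integral_add hui hvi⟩
    filter_upwards [hfu, hgv] with ω h1 h2 x hx
    simp only [Pi.add_apply]
    linarith [h1 x hx, h2 x hx]
  let N : boundedFun (Ω × X) → ℝ := fun f => p f
  have hNsmul : ∀ c : ℝ, 0 < c → ∀ f, N (c • f) = c * N f := by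
    intro c hc f
    refine le_antisymm (hsmul c hc f f.2) ?_
    have := hsmul c⁻¹ (inv_pos.2 hc) (c • f : boundedFun (Ω × X)) (c • f).2
    rw [Submodule.coe_smul, inv_smul_smul₀ hc.ne'] at this
    rwa [le_inv_mul_iff₀ hc] at this
  have hN0 : N 0 = 0 := by
    have := hNsmul 2 two_pos 0
    rw [smul_zero] at this
    linarith
  have hNadd : ∀ f g, N (f + g) ≤ N f + N g := fun f g => hadd f f.2 g g.2
  let s : boundedFun (Ω × X) := ⟨S.indicator 1, indicator_one_mem_boundedFun S⟩
  have hs : ∀ c : ℝ, c • s = 0 → c • N s = 0 := by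
    intro c hc
    rcases smul_eq_zero.1 hc with h | h
    · simp [h]
    · simp [h, hN0]
  let φ : boundedFun (Ω × X) →ₗ.[ℝ] ℝ :=
    LinearPMap.mkSpanSingleton' (σ := RingHom.id ℝ) s (N s) hs
  obtain ⟨g, hgs, hg⟩ := exists_extension_of_le_sublinear
    φ N hNsmul hNadd (by
      rintro ⟨x, hx⟩
      obtain ⟨c, rfl⟩ := Submodule.mem_span_singleton.1 hx
      rw [LinearPMap.mkSpanSingleton'_apply, RingHom.id_apply, smul_eq_mul]
      rcases lt_trichotomy c 0 with hc | rfl | hc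
      · have h1 := hNsmul (-c) (neg_pos.2 hc) s
        have h2 := hNadd (c • s) ((-c) • s)
        rw [← add_smul, add_neg_cancel, zero_smul, hN0, h1] at h2
        change c * N s ≤ N (c • s)
        linarith
      · simp [hN0]
      · exact (hNsmul c hc s).ge)
  obtain ⟨L, hL⟩ := LinearMap.exists_extend g
  have hLg : ∀ f (hf : f ∈ boundedFun (Ω × X)), L f = g ⟨f, hf⟩ := fun f hf =>
    LinearMap.congr_fun hL ⟨f, hf⟩
  have hLle : ∀ f ∈ boundedFun (Ω × X), ∀ r ∈ coboundaryBounds P E Φ f, L f ≤ r :=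
    fun f hf r hr => (hLg f hf).trans_le ((hg _).trans (csInf_le (hbdd f hf) hr))
  refine ⟨L, fun f hf hf0 => ?_, fun A hA => ?_, fun f hf => ?_, fun ε hε => ?_⟩
  · rw [← neg_nonpos, ← map_neg]
    refine hLle _ (neg_mem hf) _ ⟨0, 0, measurable_const, integrable_zero _ _ _, zero_mem _, ?_,
      by simp⟩
    filter_upwards [hf0] with ω hω x hx
    simpa using hω x hx
  · have hb := indicator_one_mem_boundedFun (A ×ˢ (univ : Set X))
    have hAi : Integrable (A.indicator (1 : Ω → ℝ)) P := (integrable_const _).indicator hA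
    have hint : ∫ ω, A.indicator (1 : Ω → ℝ) ω ∂P = P.real A := integral_indicator_one hA
    have heq : ∀ ω x, (A ×ˢ (univ : Set X)).indicator (1 : Ω × X → ℝ) (ω, x)
        = A.indicator 1 ω := fun ω x => by
      by_cases hω : ω ∈ A <;> simp [hω]
    refine le_antisymm (hLle _ hb _ ⟨A.indicator 1, 0, measurable_const.indicator hA, hAi,
      zero_mem _, .of_forall fun ω x _ => by simp [heq], hint⟩) ?_
    rw [← neg_le_neg_iff, ← map_neg]
    refine hLle _ (neg_mem hb) _ ⟨fun ω => -A.indicator 1 ω, 0,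
      (measurable_const.indicator hA).neg, hAi.neg, zero_mem _,
      .of_forall fun ω x _ => by simp [heq], by rw [integral_neg, hint]⟩
  · have hc := comp_mem_boundedFun hf Φ
    refine le_antisymm ?_ ?_
    · rw [← sub_nonpos, ← map_sub]
      exact hLle _ (sub_mem hc hf) _ ⟨0, -f, measurable_const, integrable_zero _ _ _, neg_mem hf,
        .of_forall fun ω x _ => by simp, by simp⟩
    · rw [← sub_nonpos, ← map_sub]
      exact hLle _ (sub_mem hf hc) _ ⟨0, f, measurable_const, integrable_zero _ _ _, hf,
        .of_forall fun ω x _ => by simp, by simp⟩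
  · have hLs : L (S.indicator 1) = N s := by
      rw [hLg _ s.2]
      have hmem : s ∈ φ.domain := Submodule.mem_span_singleton_self s
      exact (hgs ⟨s, hmem⟩).trans (LinearPMap.mkSpanSingleton'_apply_self _ _ _ hmem)
    rw [hLs] at hε
    exact exists_lt_of_csInf_lt (hnon _ s.2) hε

theorem MeasureTheory.Measure.ext_of_isClosed_le {X : Type*} [PseudoMetricSpace X]
    [MeasurableSpace X] [BorelSpace X] {μ ν : Measure X} [IsFiniteMeasure μ] [IsFiniteMeasure ν]
    (huniv : μ univ = ν univ) (hle : ∀ C, IsClosed C → μ C ≤ ν C) : μ = ν := by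
  refine ext_of_generate_finite {C | IsClosed C}
    (BorelSpace.measurable_eq.trans borel_eq_generateFrom_isClosed) isPiSystem_isClosed
    (fun C hC => le_antisymm (hle C hC) ?_) huniv
  have hopen : ∀ G, IsOpen G → ν G ≤ μ G := by
    intro G hG
    have h := hle Gᶜ hG.isClosed_compl
    rw [measure_compl hG.measurableSet (measure_ne_top _ _),
      measure_compl hG.measurableSet (measure_ne_top _ _), huniv] at h
    exact (ENNReal.sub_le_sub_iff_left (measure_mono (subset_univ _)) (measure_ne_top _ _)).1 h
  have hlim := tendsto_measure_cthickening_of_isClosed (μ := μ) (s := C)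
    ⟨1, one_pos, measure_ne_top _ _⟩ hC
  refine ge_of_tendsto (hlim.mono_left (nhdsWithin_le_nhds (s := Ioi 0))) ?_
  filter_upwards [self_mem_nhdsWithin] with δ hδ
  exact (measure_mono (Metric.self_subset_thickening hδ C)).trans
    ((hopen _ Metric.isOpen_thickening).trans
      (measure_mono (Metric.thickening_subset_cthickening δ C)))

/-- A positive functional on the bounded functions that is invariant under a continuous bundle
random dynamical system yields an invariant measure dominating it on closed sets. -/
theorem exists_invariant_measure_of_functional {Ω X : Type*} [MeasurableSpace Ω] {P : Measure Ω}
    [IsProbabilityMeasure P] [P.IsComplete] [MetricSpace X] [CompactSpace X] [MeasurableSpace X]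
    [BorelSpace X] {θ : Ω → Ω} (hθ : MeasurePreserving θ P P) {E : Set (Ω × X)}
    (hE : MeasurableSet E) (hEcl : ∀ ω, IsClosed (fiber E ω)) {T : Ω → X → X}
    (hTm : Measurable fun p : Ω × X => T p.1 p.2)
    (hTc : ∀ᵐ ω ∂P, ContinuousOn (T ω) (fiber E ω)) {L : (Ω × X → ℝ) →ₗ[ℝ] ℝ}
    (hpos : ∀ f ∈ boundedFun (Ω × X), (∀ᵐ ω ∂P, ∀ x ∈ fiber E ω, 0 ≤ f (ω, x)) → 0 ≤ L f)
    (hmarg : ∀ A : Set Ω, MeasurableSet A → L ((A ×ˢ univ).indicator 1) = P.real A)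
    (hinv : ∀ f ∈ boundedFun (Ω × X), L (f ∘ fun p : Ω × X => (θ p.1, T p.1 p.2)) = L f) :
    ∃ μ : Measure (Ω × X), IsProbabilityMeasure μ ∧ μ.map Prod.fst = P ∧ μ E = 1 ∧
      μ.map (fun p : Ω × X => (θ p.1, T p.1 p.2)) = μ ∧
      ∀ C, IsClosed C → L ((univ ×ˢ C).indicator 1) ≤ μ.real (univ ×ˢ C) := by
  set Φ : Ω × X → Ω × X := fun p => (θ p.1, T p.1 p.2) with hΦdef
  have hΦ : Measurable Φ := (hθ.measurable.comp measurable_fst).prodMk hTm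
  have hb := indicator_one_mem_boundedFun (α := Ω × X)
  have hpos' : ∀ f ∈ boundedFun (Ω × X), 0 ≤ f → 0 ≤ L f := fun f hf h =>
    hpos f hf (.of_forall fun ω x _ => h _)
  have hmono : ∀ S S' : Set (Ω × X), (∀ᵐ ω ∂P, ∀ x ∈ fiber E ω, (ω, x) ∈ S → (ω, x) ∈ S') →
      L (S.indicator 1) ≤ L (S'.indicator 1) := by
    intro S S' h
    rw [← sub_nonneg, ← map_sub]
    refine hpos _ (sub_mem (hb S') (hb S)) ?_
    filter_upwards [h] with ω h x hx
    by_cases hS : (ω, x) ∈ S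
    · simp [hS, h x hx hS]
    · rw [Pi.sub_apply, indicator_of_notMem hS, sub_zero]
      exact indicator_nonneg (fun _ _ => zero_le_one) _
  have hone : L ((univ : Set (Ω × X)).indicator 1) = 1 := by
    rw [← univ_prod_univ, hmarg univ .univ, probReal_univ]
  obtain ⟨μ, hfst, hμ⟩ := exists_measure_prod_le_of_positive_functional P L hpos' hmarg
  have hprob : IsProbabilityMeasure μ := ⟨by
    rw [← preimage_univ (f := Prod.fst), ← Measure.map_apply measurable_fst .univ, hfst,
      measure_univ]⟩
  have hclosed : ∀ S, MeasurableSet S → (∀ᵐ ω ∂P, IsClosed (fiber S ω)) →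
      L (S.indicator 1) ≤ μ.real S := by
    intro S hS hcl
    have h1 := measure_le_of_ae_isOpen_fiber hpos' hfst hμ hS.compl
      (hcl.mono fun ω h => h.isOpen_compl)
    have h2 := ENNReal.toReal_mono ENNReal.ofReal_ne_top h1
    rw [ENNReal.toReal_ofReal (hpos' _ (hb _) (indicator_nonneg fun _ _ => zero_le_one))] at h2
    change μ.real Sᶜ ≤ _ at h2
    have h3 : L (Sᶜ.indicator 1) = 1 - L (S.indicator 1) := by
      rw [indicator_compl, map_sub, ← hone, indicator_univ]
    rw [probReal_compl_eq_one_sub hS, h3] at h2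
    linarith
  refine ⟨μ, hprob, hfst, ?_, ?_, fun C hC => hclosed _ (MeasurableSet.univ.prod hC.measurableSet)
    (.of_forall fun ω => ?_)⟩
  · have h1 := hclosed E hE (.of_forall hEcl)
    have h2 := hmono univ E (.of_forall fun ω x hx _ => hx)
    rw [hone] at h2
    have h3 : μ.real E = 1 := le_antisymm measureReal_le_one (h2.trans h1)
    rwa [measureReal_def, ENNReal.toReal_eq_one_iff] at h3
  · have hprob' : IsProbabilityMeasure (μ.map Φ) :=
      Measure.isProbabilityMeasure_map hΦ.aemeasurable
    have hrect : ∀ A, MeasurableSet A → ∀ C, IsClosed C → μ (A ×ˢ C) ≤ μ.map Φ (A ×ˢ C) := by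
      intro A hA C hC
      let ν := ((μ.map Φ).restrict (A ×ˢ univ)).map Prod.snd
      have hν : ∀ B, MeasurableSet B → ν B = μ.map Φ (A ×ˢ B) := fun B hB => by
        rw [Measure.map_apply measurable_snd hB, Measure.restrict_apply (measurable_snd hB)]
        congr 1
        ext p
        simp [and_comm]
      have hlim := tendsto_measure_cthickening_of_isClosed (μ := ν) (s := C)
        ⟨1, one_pos, measure_ne_top _ _⟩ hC
      rw [hν C hC.measurableSet] at hlim
      refine ge_of_tendsto (hlim.mono_left (nhdsWithin_le_nhds (s := Ioi 0))) ?_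
      filter_upwards [self_mem_nhdsWithin] with δ hδ
      have hcth : IsClosed (Metric.cthickening δ C) := Metric.isClosed_cthickening
      have hR := hA.prod hcth.measurableSet
      rw [hν _ hcth.measurableSet, Measure.map_apply hΦ hR]
      have hS := (hΦ hR).inter hE
      have h1 : L ((Φ ⁻¹' (A ×ˢ Metric.cthickening δ C) ∩ E).indicator 1)
          ≤ μ.real (Φ ⁻¹' (A ×ˢ Metric.cthickening δ C) ∩ E) := by
        refine hclosed _ hS ?_
        filter_upwards [hTc] with ω hω
        by_cases hωA : θ ω ∈ A
        · convert hω.preimage_isClosed_of_isClosed (hEcl ω) hcth using 1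
          ext x
          simp [fiber, Φ, hωA, and_comm]
        · convert isClosed_empty (X := X)
          ext x
          simp [fiber, Φ, hωA]
      have h2 : L ((A ×ˢ Metric.cthickening δ C).indicator 1)
          ≤ L ((Φ ⁻¹' (A ×ˢ Metric.cthickening δ C) ∩ E).indicator 1) := by
        rw [← hinv _ (hb _)]
        exact hmono (Φ ⁻¹' (A ×ˢ Metric.cthickening δ C)) _
          (.of_forall fun ω x hx h => ⟨h, hx⟩)
      have h3 : L ((A ×ˢ Metric.thickening δ C).indicator 1)
          ≤ L ((A ×ˢ Metric.cthickening δ C).indicator 1) :=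
        hmono _ _ (.of_forall fun ω x _ h =>
          ⟨h.1, Metric.thickening_subset_cthickening δ C h.2⟩)
      calc μ (A ×ˢ C) ≤ μ (A ×ˢ Metric.thickening δ C) :=
            measure_mono (prod_mono_right (Metric.self_subset_thickening hδ C))
        _ ≤ ENNReal.ofReal (L ((A ×ˢ Metric.thickening δ C).indicator 1)) :=
            hμ A _ hA Metric.isOpen_thickening
        _ ≤ ENNReal.ofReal (μ.real (Φ ⁻¹' (A ×ˢ Metric.cthickening δ C) ∩ E)) :=
            ENNReal.ofReal_le_ofReal (h3.trans (h2.trans h1))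
        _ ≤ μ (Φ ⁻¹' (A ×ˢ Metric.cthickening δ C)) := by
            rw [ofReal_measureReal]
            exact measure_mono inter_subset_left
    have hA1 : ∀ A, MeasurableSet A → μ (A ×ˢ univ) = P A := fun A hA => by
      rw [← hfst, Measure.map_apply measurable_fst hA, prod_univ]
    refine ext_of_generate_finite _ generateFrom_prod.symm isPiSystem_prod ?_ ?_
    · rintro _ ⟨A, hA, B, hB, rfl⟩
      have hsec : ∀ (m : Measure (Ω × X)) (B : Set X), MeasurableSet B →
          (m.restrict (A ×ˢ univ)).map Prod.snd B = m (A ×ˢ B) := fun m B hB => by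
        rw [Measure.map_apply measurable_snd hB, Measure.restrict_apply (measurable_snd hB)]
        congr 1
        ext p
        simp [and_comm]
      rw [← hsec _ B hB, ← hsec _ B hB]
      congr 1
      symm
      refine MeasureTheory.Measure.ext_of_isClosed_le ?_ fun C hC => ?_
      · rw [hsec _ _ .univ, hsec _ _ .univ, hA1 A hA, Measure.map_apply hΦ (hA.prod .univ)]
        rw [← hθ.measure_preimage hA.nullMeasurableSet, ← hA1 _ (hθ.measurable hA)]
        congr 1
      · rw [hsec _ _ hC.measurableSet, hsec _ _ hC.measurableSet]
        exact hrect A hA C hC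
    · rw [measure_univ, measure_univ]
  · convert hC using 1
    ext x
    simp [fiber]

theorem itr_eq_snd_iterate {Ω X : Type*} (T : Ω → X → X) (θ : Ω → Ω) (n : ℕ) (ω : Ω) (x : X) :
    itr T θ n ω x = ((fun p : Ω × X => (θ p.1, T p.1 p.2))^[n] (ω, x)).2 := by
  induction n generalizing ω x with
  | zero => rfl
  | succ n ih => rw [Function.iterate_succ_apply]; exact ih _ _

theorem orbCount_eq_birkhoffSum {Ω X : Type*} (T : Ω → X → X) (θ : Ω → Ω) (A : Set X) (n : ℕ)
    (ω : Ω) (x : X) : (orbCount T θ A n ω x : ℝ) =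
      birkhoffSum (fun p : Ω × X => (θ p.1, T p.1 p.2)) ((univ ×ˢ A).indicator 1) n (ω, x) := by
  classical
  rw [orbCount, Nat.card_eq_fintype_card, Fintype.card_subtype, Finset.card_filter, birkhoffSum,
    Finset.sum_range, Nat.cast_sum]
  refine Finset.sum_congr rfl fun i _ => ?_
  simp [indicator_apply, itr_eq_snd_iterate]

theorem exists_bsup_eq_orbCount {Ω X : Type*} (T : Ω → X → X) (θ : Ω → Ω) {E : Set (Ω × X)}
    (A : Set X) (n : ℕ) {ω : Ω} (hne : (fiber E ω).Nonempty) :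
    ∃ x ∈ fiber E ω, bsup T θ E A n ω = orbCount T θ A n ω x := by
  refine Nat.sSup_mem (s := {m | ∃ x ∈ fiber E ω, m = orbCount T θ A n ω x})
    ⟨_, hne.some, hne.some_mem, rfl⟩ ⟨n, ?_⟩
  rintro _ ⟨x, -, rfl⟩
  simpa [orbCount] using Nat.card_le_card_of_injective _
    (Subtype.val_injective (p := fun i : Fin n => itr T θ (i : ℕ) ω x ∈ A))

/-- The maximal visit counts of `A` grow at rate less than `ε` if the indicator of `A` is dominated,
up to a coboundary, by a function on the base with integral less than `ε`. -/
theorem ae_exists_bsup_le {Ω X : Type*} [MeasurableSpace Ω] {P : Measure Ω}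
    [IsProbabilityMeasure P] {θ : Ω → Ω} (hθ : Ergodic θ P) {E : Set (Ω × X)}
    (hne : ∀ ω, (fiber E ω).Nonempty) {T : Ω → X → X}
    (hTmap : ∀ᵐ ω ∂P, MapsTo (T ω) (fiber E ω) (fiber E (θ ω))) {A : Set X} {r ε : ℝ}
    (hr : r ∈ coboundaryBounds P E (fun p : Ω × X => (θ p.1, T p.1 p.2))
      ((univ ×ˢ A).indicator 1)) (hε : r < ε) :
    ∀ᵐ ω ∂P, ∃ C, ∀ n, (bsup T θ E A n ω : ℝ) ≤ n * ε + C := by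
  obtain ⟨u, h, hu, hui, ⟨K, hK⟩, hfu, rfl⟩ := hr
  have hbdd := hθ.ae_bddAbove_birkhoffSum (hu.sub_const ε) (hui.sub (integrable_const ε)) (by
    rw [integral_sub hui (integrable_const ε)]
    simpa using hε)
  have hqmp := fun i => (hθ.toMeasurePreserving.iterate i).quasiMeasurePreserving
  filter_upwards [hbdd, ae_all_iff.2 fun i => (hqmp i).ae hTmap, ae_all_iff.2 fun i =>
    (hqmp i).ae hfu] with ω ⟨C, hC⟩ hmap hf
  refine ⟨C + 2 * K, fun n => ?_⟩
  obtain ⟨x, hx, hxn⟩ := exists_bsup_eq_orbCount T θ A n (hne ω)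
  rw [hxn, orbCount_eq_birkhoffSum]
  have h1 := birkhoffSum_le_birkhoffSum_add_sub (Φ := fun p : Ω × X => (θ p.1, T p.1 p.2))
    (fun _ => rfl) (fun i x hx => by
      have := hmap i hx
      exact this) hf hx n
  have h2 : birkhoffSum θ (fun ω => u ω - ε) n ω = birkhoffSum θ u n ω - n * ε := by
    simp [birkhoffSum]
  have h3 := hC (mem_range_self n)
  rw [h2] at h3
  have := abs_le.1 (hK (ω, x))
  have := abs_le.1 (hK ((fun p : Ω × X => (θ p.1, T p.1 p.2))^[n] (ω, x)))
  linarith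

theorem ocap_eq_zero_of_forall_exists_bsup_le {Ω X : Type*} {T : Ω → X → X} {θ : Ω → Ω}
    {E : Set (Ω × X)} {A : Set X} {ω : Ω}
    (h : ∀ k : ℕ, ∃ C, ∀ n, (bsup T θ E A n ω : ℝ) ≤ n * (1 / (k + 1 : ℝ)) + C) :
    ocap T θ E A ω = 0 := by
  refine Tendsto.limsup_eq ?_
  refine tendsto_order.2 ⟨fun a ha => .of_forall fun n => ha.trans_le (by positivity),
    fun a ha => ?_⟩
  obtain ⟨k, hk⟩ := exists_nat_one_div_lt ha
  obtain ⟨C, hC⟩ := h k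
  have hlim : Tendsto (fun n : ℕ => 1 / (k + 1 : ℝ) + C / n) atTop (𝓝 (1 / (k + 1 : ℝ))) := by
    simpa using tendsto_const_nhds.add (tendsto_const_div_atTop_nhds_zero_nat C)
  filter_upwards [hlim.eventually_lt_const hk, eventually_gt_atTop 0] with n hn hn0
  refine lt_of_le_of_lt ?_ hn
  have hn0 : (0 : ℝ) < n := Nat.cast_pos.2 hn0
  rw [div_le_iff₀ hn0, add_mul, div_mul_cancel₀ _ hn0.ne', mul_comm]
  exact hC n

theorem stmt18
    {Ω X : Type*} [MeasurableSpace Ω]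
    (P : MeasureTheory.Measure Ω) [MeasureTheory.IsProbabilityMeasure P] [P.IsComplete]
    [MetricSpace X] [CompactSpace X] [MeasurableSpace X] [BorelSpace X]
    (θ : Ω → Ω) (hθ : MeasureTheory.MeasurePreserving θ P P)
    (E : Set (Ω × X)) (hE : MeasurableSet E)
    (hEne : ∀ ω, (fiber E ω).Nonempty) (hEcp : ∀ ω, IsCompact (fiber E ω))
    (T : Ω → X → X) (hTm : Measurable fun p : Ω × X => T p.1 p.2)
    (hTmap : ∀ᵐ ω ∂P, Set.MapsTo (T ω) (fiber E ω) (fiber E (θ ω)))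
    (hTc : ∀ᵐ ω ∂P, ContinuousOn (T ω) (fiber E ω))
    (herg : Ergodic θ P)
    (huniq : ∃! μ : MeasureTheory.Measure (Ω × X),
      MeasureTheory.IsProbabilityMeasure μ ∧ μ.map Prod.fst = P ∧ μ E = 1 ∧
        μ.map (fun p : Ω × X => (θ p.1, T p.1 p.2)) = μ) :
    ∀ (x : X) (U : Set X), IsOpen U → x ∈ U →
      ∃ V : Set X, IsOpen V ∧ x ∈ V ∧ V ⊆ U ∧
        ∀ᵐ ω ∂P, ocap T θ E (frontier V) ω = 0 := by
  intro x U hU hxU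
  obtain ⟨μ, ⟨hμprob, hμfst, hμE, hμinv⟩, hμuniq⟩ := huniq
  obtain ⟨ε, hε, hεU⟩ := Metric.isOpen_iff.1 hU x hxU
  obtain ⟨r, ⟨hr0, hrε⟩, hr⟩ := exists_null_frontier_thickening (μ.map Prod.snd) {x} hε
  rw [Metric.thickening_singleton] at hr
  refine ⟨Metric.ball x r, Metric.isOpen_ball, Metric.mem_ball_self hr0,
    (Metric.ball_subset_ball hrε.le).trans hεU, ?_⟩
  set B := frontier (Metric.ball x r)
  have hB : IsClosed B := isClosed_frontier
  obtain ⟨L, hpos, hmarg, hinv, hmax⟩ := exists_invariant_functional hθ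
    (Φ := fun p : Ω × X => (θ p.1, T p.1 p.2)) (fun _ => rfl) hEne hTmap (univ ×ˢ B)
  obtain ⟨ν, hνprob, hνfst, hνE, hνinv, hν⟩ := exists_invariant_measure_of_functional hθ hE
    (fun ω => (hEcp ω).isClosed) hTm hTc hpos hmarg hinv
  have hνB : L ((univ ×ˢ B).indicator 1) ≤ 0 := by
    rw [Measure.map_apply measurable_snd hB.measurableSet] at hr
    refine (hν B hB).trans_eq ?_
    rw [hμuniq ν ⟨hνprob, hνfst, hνE, hνinv⟩, univ_prod, measureReal_def, hr,
      ENNReal.toReal_zero]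
  have hae : ∀ᵐ ω ∂P, ∀ k : ℕ, ∃ C, ∀ n, (bsup T θ E B n ω : ℝ) ≤ n * (1 / (k + 1 : ℝ)) + C := by
    refine ae_all_iff.2 fun k => ?_
    obtain ⟨s, hs, hsk⟩ := hmax (1 / (k + 1 : ℝ)) (hνB.trans_lt (by positivity))
    exact ae_exists_bsup_le herg hEne hTmap hs hsk
  filter_upwards [hae] with ω hω
  exact ocap_eq_zero_of_forall_exists_bsup_le hω
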